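/- arXiv:1705.09565 — 4 statements merged into one kernel-verified Lean document; each statement's English description precedes it below -/
import Mathlib

section
/- Fix constants h, ε, η, λ, M > 0 and d ∈ ℕ. Let g : ℝ × ℝ^d → ℝ^d be continuous with ‖g(t,x)‖ ≤ M for all (t,x) and ‖g(t,x) − g(t,y)‖ ≤ λ·‖x − y‖ for all t, x, y. Let v : ℝ → ℝ^d be differentiable with v'(t) = h·ε·g(t, v(t)) for all t ≥ 0. Then for every t with 0 ≤ t ≤ 1/ε, ‖(1/η)·∫₀^η ρ(s/η)·(∫₀^t ( g(τ+s, v(τ+s)) − g(τ+s, v(τ)) ) dτ) ds‖ ≤ C₀·h·η·λ·M. -/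
/-!
Since `‖v'‖ ≤ h ε M` on `[0, ∞)`, the mean value inequality gives `‖v (τ + s) - v τ‖ ≤ h ε M s`, so
the Lipschitz bound on `g` and `t ε ≤ 1` bound the inner integral by `lam h M s`. Averaging this
against `ρ (s / η)` and substituting `s = η u` yields the first moment `C₀` of `ρ` times `η`.
-/

/-- Bound on the remainder term `R₂` in the proof of the averaging lemma (Lemma A.2):
for a bounded Lipschitz vector field `g` and a solution `v` of `v' = h·ε·g(t,v)`,
for `0 ≤ t ≤ 1/ε`,
`‖(1/η)∫₀^η ρ(s/η)·(∫₀^t (g(τ+s,v(τ+s)) − g(τ+s,v(τ))) dτ) ds‖ ≤ C₀·h·η·λ·M`. -/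
theorem kernel_average_R2_bound
    (ρ : ℝ → ℝ) (hρc : Continuous ρ) (hρ0 : ∀ s, 0 ≤ ρ s)
    (hρsupp : ∀ s, s ∉ Set.Icc (0:ℝ) 1 → ρ s = 0)
    (hρint : (∫ s in (0:ℝ)..1, ρ s) = 1)
    (C₀ : ℝ) (hC₀ : C₀ = ∫ s in (0:ℝ)..1, ρ s * s)
    (h ε η lam M : ℝ) (hh : 0 < h) (hε : 0 < ε) (hη : 0 < η)
    (hlam : 0 < lam) (hM : 0 < M)
    (d : ℕ)
    (g : ℝ × EuclideanSpace ℝ (Fin d) → EuclideanSpace ℝ (Fin d))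
    (hgc : Continuous g)
    (hgM : ∀ p, ‖g p‖ ≤ M)
    (hgLip : ∀ t x y, ‖g (t, x) - g (t, y)‖ ≤ lam * ‖x - y‖)
    (v : ℝ → EuclideanSpace ℝ (Fin d))
    (hv : ∀ t, 0 ≤ t → HasDerivAt v ((h * ε) • g (t, v t)) t)
    (t : ℝ) (ht0 : 0 ≤ t) (ht1 : t ≤ 1 / ε) :
    ‖(1/η) • ∫ s in (0:ℝ)..η, ρ (s/η) •
        ∫ τ in (0:ℝ)..t, (g (τ + s, v (τ + s)) - g (τ + s, v τ))‖
      ≤ C₀ * h * η * lam * M := by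
  have hv_lip : ∀ τ s : ℝ, 0 ≤ τ → 0 ≤ s → ‖v (τ + s) - v τ‖ ≤ h * ε * M * s := by
    intro τ s hτ hs
    have key := (convex_Ici (0:ℝ)).norm_image_sub_le_of_norm_hasDerivWithin_le
      (f := v) (C := h * ε * M) (fun x hx => (hv x hx).hasDerivWithinAt)
      (fun x _ => by
        rw [norm_smul, Real.norm_of_nonneg (by positivity)]
        exact mul_le_mul_of_nonneg_left (hgM _) (by positivity))
      (Set.mem_Ici.2 hτ) (Set.mem_Ici.2 (add_nonneg hτ hs))
    simpa [abs_of_nonneg hs] using key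
  have h_inner : ∀ s : ℝ, 0 ≤ s →
      ‖∫ τ in (0:ℝ)..t, (g (τ + s, v (τ + s)) - g (τ + s, v τ))‖ ≤ lam * h * M * s := by
    intro s hs
    have key := intervalIntegral.norm_integral_le_of_norm_le_const
      (a := 0) (b := t) (C := lam * (h * ε * M * s))
      (f := fun τ => g (τ + s, v (τ + s)) - g (τ + s, v τ)) (fun τ hτ => by
        rw [Set.uIoc_of_le ht0] at hτ
        exact (hgLip _ _ _).trans
          (mul_le_mul_of_nonneg_left (hv_lip τ s hτ.1.le hs) hlam.le))
    rw [sub_zero, abs_of_nonneg ht0] at key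
    have htε : t * ε ≤ 1 := (le_div_iff₀ hε).1 ht1
    calc _ ≤ _ := key
      _ = lam * h * M * s * (t * ε) := by ring
      _ ≤ lam * h * M * s * 1 := by gcongr
      _ = _ := mul_one _
  have h_outer : ‖∫ s in (0:ℝ)..η, ρ (s/η) •
        ∫ τ in (0:ℝ)..t, (g (τ + s, v (τ + s)) - g (τ + s, v τ))‖
      ≤ ∫ s in (0:ℝ)..η, ρ (s/η) * (lam * h * M * s) := by
    refine intervalIntegral.norm_integral_le_of_norm_le hη.le
      (Filter.Eventually.of_forall fun s hs => ?_)
      (Continuous.intervalIntegrable (by fun_prop) _ _)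
    rw [norm_smul, Real.norm_of_nonneg (hρ0 _)]
    exact mul_le_mul_of_nonneg_left (h_inner s hs.1.le) (hρ0 _)
  have h_moment : ∫ s in (0:ℝ)..η, ρ (s/η) * (lam * h * M * s)
      = η * (lam * h * M * η * C₀) := by
    have hsub := intervalIntegral.integral_comp_div (a := 0) (b := η)
      (fun u => lam * h * M * η * (ρ u * u)) hη.ne'
    rw [zero_div, div_self hη.ne', smul_eq_mul] at hsub
    rw [hC₀, ← intervalIntegral.integral_const_mul (lam * h * M * η), ← hsub]
    congr 1
    ext s
    field_simp
  rw [norm_smul, Real.norm_of_nonneg (by positivity)]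
  calc _ ≤ 1 / η * (η * (lam * h * M * η * C₀)) :=
        mul_le_mul_of_nonneg_left (h_outer.trans h_moment.le) (by positivity)
    _ = C₀ * h * η * lam * M := by field_simp
end

section
/- Fix constants h, ε, η, λ, M > 0 and d ∈ ℕ. Let g : ℝ × ℝ^d → ℝ^d be continuous with ‖g(t,x)‖ ≤ M for all (t,x) and ‖g(t,x) − g(t,y)‖ ≤ λ·‖x − y‖ for all t, x, y. Let v : ℝ → ℝ^d be differentiable with v'(t) = h·ε·g(t, v(t)) for all t ≥ 0, and define φ(t) = ∫₀^t g(τ, v(τ)) dτ. Then for every t with 0 ≤ t ≤ 1/ε, ‖(1/η)·∫₀^η ρ(s/η)·φ(t+s) ds − ∫₀^t (1/η)·∫₀^η ρ(s/η)·g(τ+s, v(τ)) ds dτ‖ ≤ C₀·(1 + λ·h)·M·η. -/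
/-!
For fixed `s ≥ 0`, split `φ (t + s) = ∫₀^s g(τ, v τ) dτ + ∫₀^t g(τ + s, v (τ + s)) dτ`. The first
term is at most `M * s`; since `v` is `h * ε * M`-Lipschitz on `[0, ∞)`, replacing `v (τ + s)` by
`v τ` in the second one costs at most `t * lam * (h * ε * M * s) ≤ lam * h * M * s`, because
`t * ε ≤ 1` (`norm_integral_sub_shift_le`). Fubini moves the `τ`-integral inside the kernel average,
so the quantity to bound is the kernel average of these differences, hence at most
`(1 + lam * h) * M` times `(1/η) * ∫₀^η ρ(s/η) * s ds = C₀ * η`.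

The trajectory `v` is only controlled on `[0, ∞)`; it is replaced by `τ ↦ v (max τ 0)`, which is
continuous on the whole line and gives the same integrals.
-/

open MeasureTheory

/-- The pointwise estimate before averaging: the time integral along the shifted trajectory
versus the integral of the shifted field along the unshifted trajectory. The constant `L` is a
Lipschitz bound for the trajectory on `[0, ∞)`. -/
lemma norm_integral_sub_shift_le {E : Type*} [NormedAddCommGroup E] [NormedSpace ℝ E]
    {g : ℝ × E → E} (hgc : Continuous g) {M lam L : ℝ} (hlam : 0 ≤ lam)
    (hgM : ∀ p, ‖g p‖ ≤ M) (hgLip : ∀ t x y, ‖g (t, x) - g (t, y)‖ ≤ lam * ‖x - y‖)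
    {w : ℝ → E} (hw : Continuous w)
    (hwL : ∀ τ s, 0 ≤ τ → 0 ≤ s → ‖w (τ + s) - w τ‖ ≤ L * s)
    {t s : ℝ} (ht : 0 ≤ t) (hs : 0 ≤ s) :
    ‖(∫ τ in (0:ℝ)..(t + s), g (τ, w τ)) - ∫ τ in (0:ℝ)..t, g (τ + s, w τ)‖
      ≤ M * s + lam * (L * s) * t := by
  have hint : ∀ a b, IntervalIntegrable (fun τ => g (τ, w τ)) volume a b := fun a b =>
    Continuous.intervalIntegrable (by fun_prop) a b
  have hsplit : (∫ τ in (0:ℝ)..(t + s), g (τ, w τ)) - ∫ τ in (0:ℝ)..t, g (τ + s, w τ)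
      = (∫ τ in (0:ℝ)..s, g (τ, w τ))
        + ∫ τ in (0:ℝ)..t, (g (τ + s, w (τ + s)) - g (τ + s, w τ)) := by
    rw [intervalIntegral.integral_sub (Continuous.intervalIntegrable (by fun_prop) _ _)
      (Continuous.intervalIntegrable (by fun_prop) _ _),
      intervalIntegral.integral_comp_add_right (fun τ => g (τ, w τ)), zero_add,
      ← intervalIntegral.integral_add_adjacent_intervals (hint 0 s) (hint s (t + s))]
    abel
  rw [hsplit]
  refine (norm_add_le _ _).trans (add_le_add ?_ ?_)
  · simpa [abs_of_nonneg hs] using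
      intervalIntegral.norm_integral_le_of_norm_le_const (a := 0) (b := s)
        (f := fun τ => g (τ, w τ)) (C := M) (fun τ _ => hgM _)
  · have := intervalIntegral.norm_integral_le_of_norm_le_const (a := 0) (b := t)
        (f := fun τ => g (τ + s, w (τ + s)) - g (τ + s, w τ)) (C := lam * (L * s))
        (fun τ hτ => by
          rw [Set.uIoc_of_le ht] at hτ
          exact (hgLip _ _ _).trans (mul_le_mul_of_nonneg_left (hwL τ s hτ.1.le hs) hlam))
    simpa [abs_of_nonneg ht] using this

/-- Lemma A.2 of the paper: for a bounded Lipschitz vector field `g`, a solution `v` of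
`v' = h·ε·g(t,v)`, and `φ(t) = ∫₀^t g(τ, v(τ)) dτ`, the kernel average of `φ` agrees with
the time integral of the kernel-averaged vector field along `v` up to `C₀·(1+λ·h)·M·η`,
for `0 ≤ t ≤ 1/ε`. -/
theorem kernel_average_of_integral_bound
    (ρ : ℝ → ℝ) (hρc : Continuous ρ) (hρ0 : ∀ s, 0 ≤ ρ s)
    (hρsupp : ∀ s, s ∉ Set.Icc (0:ℝ) 1 → ρ s = 0)
    (hρint : (∫ s in (0:ℝ)..1, ρ s) = 1)
    (C₀ : ℝ) (hC₀ : C₀ = ∫ s in (0:ℝ)..1, ρ s * s)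
    (h ε η lam M : ℝ) (hh : 0 < h) (hε : 0 < ε) (hη : 0 < η)
    (hlam : 0 < lam) (hM : 0 < M)
    (d : ℕ)
    (g : ℝ × EuclideanSpace ℝ (Fin d) → EuclideanSpace ℝ (Fin d))
    (hgc : Continuous g)
    (hgM : ∀ p, ‖g p‖ ≤ M)
    (hgLip : ∀ t x y, ‖g (t, x) - g (t, y)‖ ≤ lam * ‖x - y‖)
    (v : ℝ → EuclideanSpace ℝ (Fin d))
    (hv : ∀ t, 0 ≤ t → HasDerivAt v ((h * ε) • g (t, v t)) t)
    (φ : ℝ → EuclideanSpace ℝ (Fin d))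
    (hφ : ∀ t, φ t = ∫ τ in (0:ℝ)..t, g (τ, v τ))
    (t : ℝ) (ht0 : 0 ≤ t) (ht1 : t ≤ 1 / ε) :
    ‖((1/η) • ∫ s in (0:ℝ)..η, ρ (s/η) • φ (t + s)) -
        ∫ τ in (0:ℝ)..t, (1/η) • ∫ s in (0:ℝ)..η, ρ (s/η) • g (τ + s, v τ)‖
      ≤ C₀ * (1 + lam * h) * M * η := by
  obtain ⟨w, hwdef⟩ : ∃ w : ℝ → EuclideanSpace ℝ (Fin d), w = fun τ => v (max τ 0) := ⟨_, rfl⟩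
  have hwv : ∀ τ, 0 ≤ τ → w τ = v τ := fun τ hτ => by simp [hwdef, max_eq_left hτ]
  have hw : Continuous w := by
    rw [hwdef, continuous_iff_continuousAt]
    intro τ
    exact ContinuousAt.comp (f := fun τ : ℝ => max τ 0) (hv _ (le_max_right _ _)).continuousAt
      (by fun_prop)
  have hwL : ∀ τ s, 0 ≤ τ → 0 ≤ s → ‖w (τ + s) - w τ‖ ≤ (h * ε * M) * s := by
    intro τ s hτ hs
    rw [hwv _ hτ, hwv _ (add_nonneg hτ hs)]
    have := (convex_Ici (0:ℝ)).norm_image_sub_le_of_norm_hasDerivWithin_le (f := v)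
      (f' := fun x => (h * ε) • g (x, v x)) (C := h * ε * M)
      (fun x hx => (hv x hx).hasDerivWithinAt)
      (fun x _ => by
        rw [norm_smul, Real.norm_of_nonneg (by positivity)]
        exact mul_le_mul_of_nonneg_left (hgM _) (by positivity))
      (Set.mem_Ici.2 hτ) (Set.mem_Ici.2 (add_nonneg hτ hs))
    simpa [abs_of_nonneg hs] using this
  have hφw : ∀ s ∈ Set.uIcc 0 η, ρ (s/η) • φ (t + s)
      = ρ (s/η) • ∫ τ in (0:ℝ)..(t + s), g (τ, w τ) := by
    intro s hs
    rw [Set.uIcc_of_le hη.le] at hs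
    rw [hφ]
    congr 1
    refine intervalIntegral.integral_congr fun τ hτ => ?_
    rw [Set.uIcc_of_le (add_nonneg ht0 hs.1)] at hτ
    simp only [hwv τ hτ.1]
  have hfubini : (∫ τ in (0:ℝ)..t, (1/η) • ∫ s in (0:ℝ)..η, ρ (s/η) • g (τ + s, v τ))
      = (1/η) • ∫ s in (0:ℝ)..η, ρ (s/η) • ∫ τ in (0:ℝ)..t, g (τ + s, w τ) := by
    have h1 : (∫ τ in (0:ℝ)..t, (1/η) • ∫ s in (0:ℝ)..η, ρ (s/η) • g (τ + s, v τ))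
        = ∫ τ in (0:ℝ)..t, (1/η) • ∫ s in (0:ℝ)..η, ρ (s/η) • g (τ + s, w τ) := by
      refine intervalIntegral.integral_congr fun τ hτ => ?_
      rw [Set.uIcc_of_le ht0] at hτ
      simp only [hwv τ hτ.1]
    rw [h1, intervalIntegral.integral_smul, intervalIntegral_intervalIntegral_swap]
    · simp only [intervalIntegral.integral_smul]
    · refine IntegrableOn.mono_set (t := Set.uIcc 0 t ×ˢ Set.uIcc 0 η) ?_
        (Set.prod_mono Set.uIoc_subset_uIcc Set.uIoc_subset_uIcc)
      refine Continuous.continuousOn ?_ |>.integrableOn_compact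
        (isCompact_uIcc.prod isCompact_uIcc)
      simp only [Function.uncurry_def]
      fun_prop
  have hΦ : Continuous fun s => ∫ τ in (0:ℝ)..(t + s), g (τ, w τ) :=
    (intervalIntegral.continuous_primitive
      (fun a b => Continuous.intervalIntegrable (by fun_prop) a b) 0).comp (by fun_prop)
  have hΨ : Continuous fun s => ∫ τ in (0:ℝ)..t, g (τ + s, w τ) :=
    intervalIntegral.continuous_parametric_intervalIntegral_of_continuous' (by fun_prop) 0 t
  have hρη : Continuous fun s => ρ (s / η) := by fun_prop
  have hρΦ : Continuous fun s => ρ (s / η) • ∫ τ in (0:ℝ)..(t + s), g (τ, w τ) := hρη.smul hΦ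
  have hρΨ : Continuous fun s => ρ (s / η) • ∫ τ in (0:ℝ)..t, g (τ + s, w τ) := hρη.smul hΨ
  rw [intervalIntegral.integral_congr hφw, hfubini, ← smul_sub,
    ← intervalIntegral.integral_sub (hρΦ.intervalIntegrable _ _)
      (hρΨ.intervalIntegrable _ _), norm_smul,
    Real.norm_of_nonneg (by positivity)]
  have hbound : ‖∫ s in (0:ℝ)..η, (ρ (s/η) • (∫ τ in (0:ℝ)..(t + s), g (τ, w τ))
        - ρ (s/η) • ∫ τ in (0:ℝ)..t, g (τ + s, w τ))‖
      ≤ ∫ s in (0:ℝ)..η, ((1 + lam * h) * M * η) * (ρ (s/η) * (s/η)) := by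
    refine intervalIntegral.norm_integral_le_of_norm_le hη.le
      (Filter.Eventually.of_forall fun s hs => ?_)
      (Continuous.intervalIntegrable (by fun_prop) _ _)
    rw [← smul_sub, norm_smul, Real.norm_of_nonneg (hρ0 _)]
    have hpt := norm_integral_sub_shift_le hgc hlam.le hgM hgLip hw hwL ht0 hs.1.le
    have htε : t * ε ≤ 1 := (le_div_iff₀ hε).1 ht1
    have hle : M * s + lam * (h * ε * M * s) * t ≤ (1 + lam * h) * M * s := by
      have : 0 ≤ lam * h * M * s := by have := hs.1; positivity
      nlinarith
    calc _ ≤ ρ (s/η) * ((1 + lam * h) * M * s) :=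
          mul_le_mul_of_nonneg_left (hpt.trans hle) (hρ0 _)
      _ = _ := by field_simp
  -- The substitution `u = s / η` identifies the remaining integral as `η * C₀`.
  rw [intervalIntegral.integral_const_mul,
    intervalIntegral.integral_comp_div (fun u => ρ u * u) hη.ne', zero_div, div_self hη.ne',
    ← hC₀, smul_eq_mul] at hbound
  calc _ ≤ 1 / η * ((1 + lam * h) * M * η * (η * C₀)) :=
        mul_le_mul_of_nonneg_left hbound (by positivity)
    _ = _ := by field_simp
end

section
/- Fix constants h, ε, η, λ, M > 0 and d ∈ ℕ. Let g : ℝ × ℝ^d → ℝ^d be continuous with ‖g(t,x)‖ ≤ M for all (t,x) and ‖g(t,x) − g(t,y)‖ ≤ λ·‖x − y‖ for all t, x, y. Let v : ℝ → ℝ^d be differentiable with v'(t) = h·ε·g(t, v(t)) for all t ≥ 0, and define the kernel-averaged vector field g_η(t,x) = (1/η)·∫₀^η ρ(s/η)·g(t+s, x) ds. Then for every t with 0 ≤ t ≤ 1/ε, ‖∫₀^t g(τ, v(τ)) dτ − ∫₀^t g_η(τ, v(τ)) dτ‖ ≤ C₀·(2 + λ·h)·M·η. -/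
/-!
Substituting `s ↦ η s` in the averaged field and exchanging the order of integration, the difference
of the two integrals is the `ρ`-average over `s ∈ [0,1]` of
`∫₀ᵗ g(τ, v τ) dτ - ∫₀ᵗ g(τ + ηs, v τ) dτ`, because `ρ` has total mass one.

For a shift `σ = ηs`, this difference is split by inserting `g(τ + σ, v(τ + σ))`. The integral of
the bounded function `F τ = g(τ, v τ)` changes by at most `2Mσ` under the shift
(`norm_integral_sub_integral_shift_le`). The trajectory `v` is Lipschitz with constant `hεM`, so the
remainder is at most `t · λhεMσ ≤ λhMσ` as `tε ≤ 1` (`norm_integral_sub_shifted_time_le`).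
Averaging `(2 + λh)Mηs` against `ρ` yields the factor `C₀`.
-/

/-- Translating the integrand by `σ` only changes the contributions of two end intervals of
length `σ`. -/
lemma norm_integral_sub_integral_shift_le {E : Type*} [NormedAddCommGroup E] [NormedSpace ℝ E]
    {F : ℝ → E} (hF : Continuous F) {M : ℝ} (hM : ∀ τ, ‖F τ‖ ≤ M) (t : ℝ) {σ : ℝ} (hσ : 0 ≤ σ) :
    ‖(∫ τ in (0:ℝ)..t, F τ) - ∫ τ in (0:ℝ)..t, F (τ + σ)‖ ≤ 2 * M * σ := by
  rw [intervalIntegral.integral_comp_add_right (fun τ => F τ),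
    intervalIntegral.integral_interval_sub_interval_comm (hF.intervalIntegrable _ _)
      (hF.intervalIntegrable _ _) (hF.intervalIntegrable _ _)]
  have hend : ∀ a : ℝ, ‖∫ τ in a..a + σ, F τ‖ ≤ M * σ := fun a => by
    simpa [abs_of_nonneg hσ] using
      intervalIntegral.norm_integral_le_of_norm_le_const (a := a) (b := a + σ)
        (fun x _ => hM x)
  calc _ ≤ _ := norm_sub_le _ _
    _ ≤ M * σ + M * σ := add_le_add (hend 0) (hend t)
    _ = 2 * M * σ := by ring

/-- Shifting only the explicit time argument of `g` along an `L`-Lipschitz curve `w`. -/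
lemma norm_integral_sub_shifted_time_le {E : Type*} [NormedAddCommGroup E] [NormedSpace ℝ E]
    {g : ℝ × E → E} (hgc : Continuous g) {M lam L : ℝ} (hlam : 0 ≤ lam)
    (hgM : ∀ p, ‖g p‖ ≤ M) (hgLip : ∀ t x y, ‖g (t, x) - g (t, y)‖ ≤ lam * ‖x - y‖)
    {w : ℝ → E} (hw : Continuous w) {t σ : ℝ} (ht : 0 ≤ t) (hσ : 0 ≤ σ)
    (hwLip : ∀ τ, 0 ≤ τ → ‖w (τ + σ) - w τ‖ ≤ L * σ) :
    ‖(∫ τ in (0:ℝ)..t, g (τ, w τ)) - ∫ τ in (0:ℝ)..t, g (τ + σ, w τ)‖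
      ≤ 2 * M * σ + lam * (L * σ) * t := by
  have hF : Continuous fun τ => g (τ, w τ) := by fun_prop
  have hFσ : Continuous fun τ => g (τ + σ, w (τ + σ)) := by fun_prop
  have hGσ : Continuous fun τ => g (τ + σ, w τ) := by fun_prop
  have h1 := norm_integral_sub_integral_shift_le hF (fun τ => hgM _) t hσ
  have h2 : ‖(∫ τ in (0:ℝ)..t, g (τ + σ, w (τ + σ))) - ∫ τ in (0:ℝ)..t, g (τ + σ, w τ)‖
      ≤ lam * (L * σ) * t := by
    rw [← intervalIntegral.integral_sub (hFσ.intervalIntegrable _ _)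
      (hGσ.intervalIntegrable _ _)]
    have := intervalIntegral.norm_integral_le_of_norm_le_const (a := 0) (b := t)
      (f := fun τ => g (τ + σ, w (τ + σ)) - g (τ + σ, w τ)) (C := lam * (L * σ)) (by
        intro τ hτ
        rw [Set.uIoc_of_le ht] at hτ
        exact (hgLip _ _ _).trans (mul_le_mul_of_nonneg_left (hwLip τ hτ.1.le) hlam))
    simpa [abs_of_nonneg ht] using this
  calc _ ≤ _ := norm_sub_le_norm_sub_add_norm_sub _ _ _
    _ ≤ _ := add_le_add h1 h2

/-- Intermediate claim in the appendix of the paper: the exact trajectory of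
`v' = h·ε·g(t,v)` satisfies the averaged integral equation up to an `O(η)` error `E₀`:
`‖∫₀^t g(τ,v(τ)) dτ − ∫₀^t g_η(τ,v(τ)) dτ‖ ≤ C₀·(2+λ·h)·M·η` for `0 ≤ t ≤ 1/ε`,
where `g_η(t,x) = (1/η)∫₀^η ρ(s/η)·g(t+s,x) ds`. -/
theorem exact_trajectory_averaged_integral_bound
    (ρ : ℝ → ℝ) (hρc : Continuous ρ) (hρ0 : ∀ s, 0 ≤ ρ s)
    (hρsupp : ∀ s, s ∉ Set.Icc (0:ℝ) 1 → ρ s = 0)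
    (hρint : (∫ s in (0:ℝ)..1, ρ s) = 1)
    (C₀ : ℝ) (hC₀ : C₀ = ∫ s in (0:ℝ)..1, ρ s * s)
    (h ε η lam M : ℝ) (hh : 0 < h) (hε : 0 < ε) (hη : 0 < η)
    (hlam : 0 < lam) (hM : 0 < M)
    (d : ℕ)
    (g : ℝ × EuclideanSpace ℝ (Fin d) → EuclideanSpace ℝ (Fin d))
    (hgc : Continuous g)
    (hgM : ∀ p, ‖g p‖ ≤ M)
    (hgLip : ∀ t x y, ‖g (t, x) - g (t, y)‖ ≤ lam * ‖x - y‖)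
    (v : ℝ → EuclideanSpace ℝ (Fin d))
    (hv : ∀ t, 0 ≤ t → HasDerivAt v ((h * ε) • g (t, v t)) t)
    (gη : ℝ × EuclideanSpace ℝ (Fin d) → EuclideanSpace ℝ (Fin d))
    (hgη : ∀ t x, gη (t, x) = (1/η) • ∫ s in (0:ℝ)..η, ρ (s/η) • g (t + s, x))
    (t : ℝ) (ht0 : 0 ≤ t) (ht1 : t ≤ 1 / ε) :
    ‖(∫ τ in (0:ℝ)..t, g (τ, v τ)) - ∫ τ in (0:ℝ)..t, gη (τ, v τ)‖
      ≤ C₀ * (2 + lam * h) * M * η := by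
  -- `v` is only controlled on `[0, ∞)`; `w` is a globally continuous function agreeing with it there.
  set w : ℝ → EuclideanSpace ℝ (Fin d) := fun τ => v (max τ 0) with hwdef
  have hwv : ∀ τ, 0 ≤ τ → w τ = v τ := fun τ hτ => by simp [hwdef, max_eq_left hτ]
  have hw : Continuous w := by
    rw [continuous_iff_continuousAt]
    intro τ
    exact ContinuousAt.comp (f := fun τ : ℝ => max τ 0) (hv _ (le_max_right τ 0)).continuousAt
      (by fun_prop)
  have hwLip : ∀ σ, 0 ≤ σ → ∀ τ, 0 ≤ τ → ‖w (τ + σ) - w τ‖ ≤ h * ε * M * σ := by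
    intro σ hσ τ hτ
    rw [hwv _ hτ, hwv _ (add_nonneg hτ hσ)]
    have := Convex.norm_image_sub_le_of_norm_hasDerivWithin_le (s := Set.Ici (0:ℝ)) (f := v)
      (C := h * ε * M) (x := τ) (y := τ + σ)
      (fun x hx => (hv x hx).hasDerivWithinAt) (fun x _ => by
        rw [norm_smul, Real.norm_of_nonneg (by positivity)]
        exact mul_le_mul_of_nonneg_left (hgM _) (by positivity))
      (convex_Ici 0) hτ (add_nonneg hτ hσ)
    simpa [abs_of_nonneg hσ] using this
  have hgη' : ∀ τ x, gη (τ, x) = ∫ s in (0:ℝ)..1, ρ s • g (τ + η * s, x) := by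
    intro τ x
    have := intervalIntegral.inv_smul_integral_comp_div (a := 0) (b := η)
      (fun s => ρ s • g (τ + η * s, x)) η
    rw [zero_div, div_self hη.ne'] at this
    rw [hgη, ← this, one_div]
    congr 1
    refine intervalIntegral.integral_congr fun s _ => ?_
    simp only [mul_div_cancel₀ s hη.ne']
  set G : ℝ → EuclideanSpace ℝ (Fin d) := fun s => ∫ τ in (0:ℝ)..t, g (τ + η * s, w τ) with hG
  have hGc : Continuous G :=
    intervalIntegral.continuous_parametric_intervalIntegral_of_continuous'
      (f := fun s τ => g (τ + η * s, w τ)) (by unfold Function.uncurry; fun_prop) _ _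
  have hswap : (∫ τ in (0:ℝ)..t, gη (τ, v τ)) = ∫ s in (0:ℝ)..1, ρ s • G s := by
    calc _ = ∫ τ in (0:ℝ)..t, ∫ s in (0:ℝ)..1, ρ s • g (τ + η * s, w τ) := by
          refine intervalIntegral.integral_congr fun τ hτ => ?_
          rw [Set.uIcc_of_le ht0] at hτ
          simp only [hgη', hwv τ hτ.1]
      _ = ∫ s in (0:ℝ)..1, ∫ τ in (0:ℝ)..t, ρ s • g (τ + η * s, w τ) := by
          refine MeasureTheory.intervalIntegral_intervalIntegral_swap ?_
          have hc : Continuous (Function.uncurry fun τ s => ρ s • g (τ + η * s, w τ)) := by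
            unfold Function.uncurry; fun_prop
          exact (hc.continuousOn.integrableOn_compact
            (isCompact_uIcc.prod isCompact_uIcc)).mono_set
            (Set.prod_mono Set.uIoc_subset_uIcc Set.uIoc_subset_uIcc)
      _ = _ := by simp only [intervalIntegral.integral_smul, hG]
  have hfirst : (∫ τ in (0:ℝ)..t, g (τ, v τ)) = ∫ s in (0:ℝ)..1, ρ s • G 0 := by
    rw [intervalIntegral.integral_smul_const, hρint, one_smul]
    refine intervalIntegral.integral_congr fun τ hτ => ?_
    rw [Set.uIcc_of_le ht0] at hτ
    simp [hwv τ hτ.1]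
  have hbound : ∀ s, 0 ≤ s → ‖G 0 - G s‖ ≤ (2 + lam * h) * M * η * s := by
    intro s hs
    have hσ : 0 ≤ η * s := mul_nonneg hη.le hs
    have := norm_integral_sub_shifted_time_le hgc hlam.le hgM hgLip hw ht0 hσ (hwLip _ hσ)
    have htε : t * ε ≤ 1 := (le_div_iff₀ hε).1 ht1
    have hc : 0 ≤ lam * h * M * (η * s) := by positivity
    simp only [hG, mul_zero, add_zero]
    nlinarith [mul_le_mul_of_nonneg_left htε hc]
  rw [hfirst, hswap, ← intervalIntegral.integral_sub
    (Continuous.intervalIntegrable (by fun_prop) _ _)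
    (Continuous.intervalIntegrable (by fun_prop) _ _)]
  calc _ ≤ ∫ s in (0:ℝ)..1, ρ s * s * ((2 + lam * h) * M * η) := by
        refine intervalIntegral.norm_integral_le_of_norm_le zero_le_one
          (Filter.Eventually.of_forall fun s hs => ?_)
          (Continuous.intervalIntegrable (by fun_prop) _ _)
        rw [← smul_sub, norm_smul, Real.norm_of_nonneg (hρ0 s)]
        calc _ ≤ ρ s * ((2 + lam * h) * M * η * s) :=
              mul_le_mul_of_nonneg_left (hbound s hs.1.le) (hρ0 s)
          _ = _ := by ring
    _ = _ := by rw [intervalIntegral.integral_mul_const, ← hC₀]; ring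
end

section
/- Let C ≥ 0, ΔT > 0, γ ≥ 0, B ≥ 0, and let e : ℕ → ℕ → ℝ be a doubly indexed family of nonnegative reals satisfying: e(0, k) = 0 for all k; e(n, 0) ≤ γ·B for all n; and e(n, k) ≤ (1 + C·ΔT)·e(n−1, k) + γ·e(n−1, k−1) for all n ≥ 1 and k ≥ 1. Then for all n and k, e(n, k) ≤ (1 + C·ΔT)^n · (n choose (k+1)) · γ^(k+1) · B. -/
/-!
Induction on `n`, with `q = 1 + C * ΔT ≥ 1`. Inserting the bounds for `e n (k + 1)` and `e n k`
into the recursion gives the factors `q ^ (n + 1)` and `q ^ n`; since `q ≥ 1`, the second is at most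
the first, and Pascal's rule adds the two binomial coefficients. In the column `k = 0` the bound
`γ * B` suffices directly, because `q ^ n * n ≥ 1` for `n ≥ 1`.
-/

/-- The double-recursion estimate forming the inductive core of the proof of Theorem 4.5
of the paper: if `e(0,k) = 0`, `e(n,0) ≤ γ·B`, and
`e(n,k) ≤ (1 + C·ΔT)·e(n−1,k) + γ·e(n−1,k−1)` for `n,k ≥ 1`, then
`e(n,k) ≤ (1 + C·ΔT)^n · C(n, k+1) · γ^(k+1) · B`. -/
theorem parareal_double_recursion
    (C ΔT γ B : ℝ) (hC : 0 ≤ C) (hΔT : 0 < ΔT) (hγ : 0 ≤ γ) (hB : 0 ≤ B)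
    (e : ℕ → ℕ → ℝ) (hpos : ∀ n k, 0 ≤ e n k)
    (h0 : ∀ k, e 0 k = 0)
    (hbase : ∀ n, e n 0 ≤ γ * B)
    (hrec : ∀ n k : ℕ, 1 ≤ n → 1 ≤ k →
      e n k ≤ (1 + C * ΔT) * e (n - 1) k + γ * e (n - 1) (k - 1)) :
    ∀ n k : ℕ, e n k ≤ (1 + C * ΔT)^n * (n.choose (k + 1)) * γ^(k + 1) * B := by
  have hq : 1 ≤ 1 + C * ΔT := le_add_of_nonneg_right (mul_nonneg hC hΔT.le)
  generalize 1 + C * ΔT = q at hq hrec ⊢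
  intro n
  induction n with
  | zero => intro k; simp [h0]
  | succ n ih =>
    intro k
    have hqn : 1 ≤ q ^ (n + 1) := one_le_pow₀ hq
    cases k with
    | zero =>
      have hn : (1 : ℝ) ≤ ((n + 1).choose (0 + 1) : ℕ) := by simp
      calc e (n + 1) 0 ≤ 1 * (γ * B) := by simpa using hbase (n + 1)
        _ ≤ (q ^ (n + 1) * ((n + 1).choose (0 + 1) : ℕ)) * (γ * B) :=
          mul_le_mul_of_nonneg_right (one_le_mul_of_one_le_of_one_le hqn hn) (mul_nonneg hγ hB)
        _ = _ := by ring
    | succ k =>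
      have hr := hrec (n + 1) (k + 1) (by omega) (by omega)
      simp only [Nat.add_sub_cancel] at hr
      have hq0 : 0 ≤ q := zero_le_one.trans hq
      have hpow : q ^ n ≤ q ^ (n + 1) := pow_le_pow_right₀ hq n.le_succ
      calc e (n + 1) (k + 1) ≤ q * e n (k + 1) + γ * e n k := hr
        _ ≤ q * (q ^ n * (n.choose (k + 1 + 1)) * γ ^ (k + 1 + 1) * B)
            + γ * (q ^ n * (n.choose (k + 1)) * γ ^ (k + 1) * B) := by
          gcongr
          · exact ih (k + 1)
          · exact ih k
        _ ≤ q * (q ^ n * (n.choose (k + 1 + 1)) * γ ^ (k + 1 + 1) * B)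
            + γ * (q ^ (n + 1) * (n.choose (k + 1)) * γ ^ (k + 1) * B) := by
          gcongr
        _ = _ := by
          rw [Nat.choose_succ_succ n (k + 1)]
          push_cast
          ring
end
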